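/- For λ > −1, t ∈ ℝ and integer m ≥ 2, the recurrence coefficients β_n(t;λ) of the monic polynomials orthogonal with respect to the generalised higher order Freud weight satisfy lim_{n→∞} β_n(t;λ) / n^{1/m} = (1/4) ( (m−1)! / (1/2)_m )^{1/m}, where (1/2)_m = (1/2)(3/2)⋯(m − 1/2) is the Pochhammer symbol. -/

import Mathlib

open MeasureTheory Real Polynomial Filter

/-- The generalised higher order Freud weight `ω(x;t,λ) = |x|^{2λ+1} exp(t x² − x^{2m})`. -/
noncomputable def freudWeight (m : ℕ) (lam t x : ℝ) : ℝ :=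
  |x| ^ (2 * lam + 1) * Real.exp (t * x ^ 2 - x ^ (2 * m))

/-!
Integrating the Pearson equation of the weight against `P n ^ 2` shows that `β` solves the Freud
equation `2 m V(β)_n = 2 t β_n + n + (2λ + 1) [n odd]`, where `V(β)_n` sums, over the `2m`-step
closed lattice paths from `n` that begin with a step down, the product of `β` over their descents.
Since `V(β)_n` dominates `β_n ^ m`, this gives `V(β)_n / n → 1 / (2m)`.

Rescale by `n ^ (1/m)` and recentre at `n`: every cluster point of these sequences is a bounded
solution `y ≥ 0` on `ℤ` of `V(y) = const`, and one constant sequence `L` solves the same equation.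
It remains to see that `V` is injective on sequences bounded away from `0` and `∞`. In the variable
`w = log y`, the weight of a closed path is the exponential of a linear form in `w` that does not
depend on the starting point of the path. Averaging over cyclic rotations thus turns
`∑ k, (V(exp w)_k - V(exp v)_k) (w_k - v_k)` into a sum over closed paths of terms
`(exp a - exp b) (a - b) ≥ 0`. These sums over `ℤ` need not converge, so they are taken against a
summable weight that varies so slowly that the rotations still nearly cancel.
-/

/-! ### Lattice paths -/

/-- The total height gained along a lattice path, encoded as the list of its steps: `true` is a
step up and `false` a step down. -/
def displacement (l : List Bool) : ℤ :=
  l.count true - l.count false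

/-- The heights from which the path with starting height `k` and steps `l` steps down. -/
def descents : ℤ → List Bool → Multiset ℤ
  | _, [] => 0
  | k, true :: l => descents (k + 1) l
  | k, false :: l => k ::ₘ descents (k - 1) l

/-- The lattice paths with `n` steps. -/
def words : ℕ → Finset (List Bool)
  | 0 => {[]}
  | n + 1 => (words n).image (List.cons true) ∪ (words n).image (List.cons false)

/-- The lattice paths with `2 * m` steps that return to their starting height. -/
def balancedWords (m : ℕ) : Finset (List Bool) :=
  {l ∈ words (2 * m) | displacement l = 0}

/-- The path that alternates `m` times between a step down and a step up. -/
def zigzag : ℕ → List Bool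
  | 0 => []
  | m + 1 => false :: true :: zigzag m

@[simp]
lemma displacement_nil : displacement [] = 0 := rfl

@[simp]
lemma displacement_true_cons (l : List Bool) : displacement (true :: l) = 1 + displacement l := by
  simp only [displacement, List.count_cons_self, Nat.cast_add, Nat.cast_one, ne_eq,
    Bool.true_eq_false, not_false_eq_true, List.count_cons_of_ne]
  ring

@[simp]
lemma displacement_false_cons (l : List Bool) :
    displacement (false :: l) = -1 + displacement l := by
  simp only [displacement, List.count_cons_self, Nat.cast_add, Nat.cast_one, ne_eq,
    Bool.false_eq_true, not_false_eq_true, List.count_cons_of_ne]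
  ring

lemma displacement_append (l₁ l₂ : List Bool) :
    displacement (l₁ ++ l₂) = displacement l₁ + displacement l₂ := by
  simp only [displacement, List.count_append, Nat.cast_add]
  ring

lemma descents_append (k : ℤ) (l₁ l₂ : List Bool) :
    descents k (l₁ ++ l₂) = descents k l₁ + descents (k + displacement l₁) l₂ := by
  induction l₁ generalizing k with
  | nil => simp [descents]
  | cons a l ih => cases a <;> simp [descents, ih, ← add_assoc, ← sub_eq_add_neg]

lemma card_descents (k : ℤ) (l : List Bool) : (descents k l).card = l.count false := by
  induction l generalizing k with
  | nil => simp [descents]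
  | cons a l ih => cases a <;> simp [descents, ih]

lemma abs_sub_le_of_mem_descents {k d : ℤ} {l : List Bool} (hd : d ∈ descents k l) :
    |d - k| ≤ l.length := by
  induction l generalizing k with
  | nil => simp [descents] at hd
  | cons a l ih =>
    rw [List.length_cons, Nat.cast_succ]
    cases a with
    | true =>
      have := ih hd
      grind
    | false =>
      rcases Multiset.mem_cons.1 hd with rfl | hd
      · rw [sub_self, abs_zero]
        positivity
      · have := ih hd
        grind

lemma mem_words {n : ℕ} {l : List Bool} : l ∈ words n ↔ l.length = n := by
  induction n generalizing l with
  | zero => simp [words]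
  | succ n ih => rcases l with _ | ⟨_ | _, l⟩ <;> simp [words, ih]

lemma sum_words_succ {M : Type*} [AddCommMonoid M] (n : ℕ) (f : List Bool → M) :
    ∑ l ∈ words (n + 1), f l = ∑ l ∈ words n, f (true :: l) + ∑ l ∈ words n, f (false :: l) := by
  rw [words, Finset.sum_union, Finset.sum_image (by simp), Finset.sum_image (by simp)]
  simp +contextual [Finset.disjoint_left]

lemma mem_balancedWords {m : ℕ} {l : List Bool} :
    l ∈ balancedWords m ↔ l.length = 2 * m ∧ displacement l = 0 := by
  rw [balancedWords, Finset.mem_filter, mem_words]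

lemma count_false_of_mem_balancedWords {m : ℕ} {l : List Bool} (hl : l ∈ balancedWords m) :
    l.count false = m := by
  obtain ⟨hlen, hdis⟩ := mem_balancedWords.1 hl
  have := List.count_true_add_count_false l
  rw [displacement] at hdis
  omega

lemma zigzag_mem_balancedWords (m : ℕ) : zigzag m ∈ balancedWords m := by
  induction m with
  | zero => simp [zigzag, mem_balancedWords]
  | succ m ih =>
    rw [mem_balancedWords] at ih ⊢
    simp only [zigzag, List.length_cons, ih.1, displacement_false_cons, displacement_true_cons,
      ih.2, add_zero, neg_add_cancel, and_true]
    ring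

lemma descents_zigzag (k : ℤ) (m : ℕ) : descents k (zigzag m) = Multiset.replicate m k := by
  induction m with
  | zero => rfl
  | succ m ih => rw [zigzag, descents, descents, sub_add_cancel, ih, Multiset.replicate_succ]

/-! ### Rotation of closed paths -/

/-- A closed lattice path with `2 * m` steps, given by its steps and its starting height. -/
abbrev ClosedPath (m : ℕ) : Type := balancedWords m × ℤ

/-- The sum of `f` over the descents of a closed path. -/
def descentSum {m : ℕ} (f : ℤ → ℝ) (q : ClosedPath m) : ℝ :=
  ((descents q.2 q.1).map f).sum

/-- The contribution of the first step of a closed path to `descentSum f`. -/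
def firstDescentSum {m : ℕ} (f : ℤ → ℝ) (q : ClosedPath m) : ℝ :=
  ((descents q.2 (q.1.1.take 1)).map f).sum

lemma rotate_mem_balancedWords {m : ℕ} {l : List Bool} (hl : l ∈ balancedWords m) (n : ℕ) :
    l.rotate n ∈ balancedWords m := by
  simpa [mem_balancedWords, displacement, (l.rotate_perm n).count_eq] using hl

/-- The cyclic shift of the steps of a closed path by one place. -/
noncomputable def rotateWord (m : ℕ) : Equiv.Perm (balancedWords m) :=
  Equiv.ofBijective (fun l => ⟨l.1.rotate 1, rotate_mem_balancedWords l.2 1⟩)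
    (Function.Injective.bijective_of_finite fun _ _ h =>
      Subtype.ext (List.rotate_injective 1 (congrArg Subtype.val h)))

/-- The closed path that runs through the same heights with the starting point moved by one step. -/
noncomputable def rotate (m : ℕ) : Equiv.Perm (ClosedPath m) :=
  Equiv.prodShear (rotateWord m) fun l => Equiv.addRight (displacement (l.1.take 1))

section Rotation

variable {m : ℕ}

lemma descents_rotate (q : ClosedPath m) :
    descents (rotate m q).2 (rotate m q).1 = descents q.2 q.1 := by
  obtain ⟨⟨l, hl⟩, k⟩ := q
  obtain _ | ⟨a, l⟩ := l
  · simp [rotate, rotateWord]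
  · have hdis : displacement ([a] ++ l) = 0 := (mem_balancedWords.1 hl).2
    rw [displacement_append] at hdis
    calc descents (k + displacement [a]) ((a :: l).rotate 1)
        = descents (k + displacement [a]) (l ++ [a]) := by simp
      _ = descents (k + displacement [a]) l + descents k [a] := by
          rw [descents_append, add_assoc, hdis, add_zero]
      _ = descents k ([a] ++ l) := by rw [descents_append, add_comm]

lemma descentSum_rotate (f : ℤ → ℝ) (q : ClosedPath m) :
    descentSum f (rotate m q) = descentSum f q := by
  rw [descentSum, descents_rotate, descentSum]

lemma rotate_iterate (q : ClosedPath m) {j : ℕ} (hj : j ≤ 2 * m) :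
    ((rotate m)^[j] q).1 = q.1.1.rotate j ∧
      ((rotate m)^[j] q).2 = q.2 + displacement (q.1.1.take j) := by
  induction j with
  | zero => simp
  | succ j ih =>
    obtain ⟨hword, hheight⟩ := ih (by omega)
    have hlen : j < q.1.1.length := by rw [(mem_balancedWords.1 q.1.2).1]; omega
    rw [Function.iterate_succ_apply']
    constructor
    · rw [← List.rotate_rotate, ← hword]
      rfl
    · change ((rotate m)^[j] q).2 + displacement (((rotate m)^[j] q).1.1.take 1) = _
      rw [hword, hheight, List.rotate_eq_drop_append_take hlen.le,
        List.take_append_of_le_length (by simp; omega), add_assoc, ← displacement_append,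
        ← List.take_add]

lemma birkhoffSum_firstDescentSum (f : ℤ → ℝ) (q : ClosedPath m) :
    birkhoffSum (rotate m) (firstDescentSum f) (2 * m) q = descentSum f q := by
  have partial_sum (j : ℕ) (hj : j ≤ 2 * m) :
      birkhoffSum (rotate m) (firstDescentSum f) j q =
        ((descents q.2 (q.1.1.take j)).map f).sum := by
    induction j with
    | zero => simp [descents]
    | succ j ih =>
      obtain ⟨hword, hheight⟩ := rotate_iterate q (Nat.le_of_succ_le hj)
      have hlen : j < q.1.1.length := by rw [(mem_balancedWords.1 q.1.2).1]; omega
      rw [birkhoffSum_succ, ih (by omega), firstDescentSum, hword, hheight,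
        List.rotate_eq_drop_append_take hlen.le, List.take_append_of_le_length (by simp; omega),
        List.take_add, descents_append, Multiset.map_add, Multiset.sum_add]
  rw [partial_sum _ le_rfl, List.take_of_length_le (mem_balancedWords.1 q.1.2).1.le, descentSum]

end Rotation

/-! ### Powers of a Jacobi matrix and the Freud form -/

/-- The entry at row `n` and column `l` of the `j`-th power of the bi-infinite Jacobi matrix with
entries `1` above and `b` below the diagonal. -/
def jacobiPow {R : Type*} [Semiring R] (b : ℤ → R) : ℕ → ℤ → ℤ → R
  | 0, n, l => if n = l then 1 else 0
  | j + 1, n, l => jacobiPow b j (n + 1) l + b n * jacobiPow b j (n - 1) l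

/-- The left-hand side of the Freud equation at `k` for the weight `exp (-x ^ (2 * m))`, up to the
factor `2 * m`: the `2 * m`-step closed lattice paths from `k` that begin with a step down, each
weighted by the product of `b` over its descents. -/
def freudForm {R : Type*} [Semiring R] (m : ℕ) (b : ℤ → R) (k : ℤ) : R :=
  b k * jacobiPow b (2 * m - 1) (k - 1) k

section Semiring

variable {R : Type*} [Semiring R]

lemma jacobiPow_eq_zero_of_lt (b : ℤ → R) {j : ℕ} {n l : ℤ} (h : n + j < l) :
    jacobiPow b j n l = 0 := by
  induction j generalizing n with
  | zero =>
    rw [jacobiPow, if_neg]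
    grind
  | succ j ih => rw [jacobiPow, ih (by grind), ih (by grind), mul_zero, add_zero]

lemma jacobiPow_add_natCast (b : ℤ → R) (j : ℕ) (n : ℤ) : jacobiPow b j n (n + j) = 1 := by
  induction j generalizing n with
  | zero => simp [jacobiPow]
  | succ j ih =>
    rw [jacobiPow, jacobiPow_eq_zero_of_lt b (n := n - 1) (by grind), mul_zero, add_zero,
      show n + (j + 1 : ℕ) = n + 1 + j by grind, ih]

lemma jacobiPow_shift (b : ℤ → R) (N : ℤ) (j : ℕ) (n l : ℤ) :
    jacobiPow (fun k => b (N + k)) j n l = jacobiPow b j (N + n) (N + l) := by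
  induction j generalizing n with
  | zero => simp [jacobiPow]
  | succ j ih => simp [jacobiPow, ih, add_assoc, add_sub_assoc]

lemma freudForm_shift (m : ℕ) (b : ℤ → R) (N k : ℤ) :
    freudForm m (fun k => b (N + k)) k = freudForm m b (N + k) := by
  rw [freudForm, jacobiPow_shift, freudForm, add_sub_assoc]

end Semiring

section CommSemiring

variable {R : Type*} [CommSemiring R]

lemma jacobiPow_eq_sum (b : ℤ → R) (j : ℕ) (n l : ℤ) :
    jacobiPow b j n l =
      ∑ w ∈ words j with n + displacement w = l, ((descents n w).map b).prod := by
  induction j generalizing n with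
  | zero => simp [jacobiPow, words, Finset.sum_filter, descents]
  | succ j ih =>
    rw [jacobiPow, ih, ih, Finset.sum_filter, Finset.sum_filter, Finset.sum_filter,
      sum_words_succ, Finset.mul_sum]
    simp [descents, add_assoc, sub_eq_add_neg]

lemma jacobiPow_const (L : R) (j d : ℕ) (n : ℤ) :
    jacobiPow (fun _ => L) j n (n + j - 2 * d) = j.choose d * L ^ d := by
  induction j generalizing n d with
  | zero =>
    rcases d with _ | d
    · simp [jacobiPow]
    · rw [jacobiPow, if_neg (by grind)]
      simp
  | succ j ih =>
    rw [jacobiPow, show n + (j + 1 : ℕ) - 2 * d = n + 1 + j - 2 * d by grind, ih]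
    rcases d with _ | d
    · rw [jacobiPow_eq_zero_of_lt _ (by grind)]
      simp
    · rw [show n + 1 + j - 2 * (d + 1 : ℕ) = n - 1 + j - 2 * d by grind, ih,
        Nat.choose_succ_succ' j d]
      push_cast
      ring

lemma freudForm_const {m : ℕ} (hm : m ≠ 0) (L : R) (k : ℤ) :
    freudForm m (fun _ => L) k = (2 * m - 1).choose (m - 1) * L ^ m := by
  obtain ⟨r, rfl⟩ := Nat.exists_eq_succ_of_ne_zero hm
  have h := jacobiPow_const L (2 * (r + 1) - 1) r (k - 1)
  rw [show k - 1 + (2 * (r + 1) - 1 : ℕ) - 2 * r = k by grind] at h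
  rw [freudForm, Nat.succ_eq_add_one, h, Nat.add_sub_cancel, pow_succ]
  ring

lemma descents_prod_const_mul (c : R) (b : ℤ → R) {m : ℕ} (k : ℤ) {l : List Bool}
    (hl : l ∈ balancedWords m) :
    ((descents k l).map fun i => c * b i).prod = c ^ m * ((descents k l).map b).prod := by
  rw [Multiset.prod_map_mul, Multiset.map_const', Multiset.prod_replicate, card_descents,
    count_false_of_mem_balancedWords hl]

lemma freudForm_eq_sum {m : ℕ} (hm : m ≠ 0) (b : ℤ → R) (k : ℤ) :
    freudForm m b k =
      ∑ l ∈ balancedWords m with l.head? = some false, ((descents k l).map b).prod := by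
  obtain ⟨r, rfl⟩ := Nat.exists_eq_succ_of_ne_zero hm
  rw [freudForm, jacobiPow_eq_sum, balancedWords, Finset.filter_filter, Finset.sum_filter,
    Finset.sum_filter, show 2 * (r + 1) = 2 * (r + 1) - 1 + 1 by omega, sum_words_succ,
    Nat.add_sub_cancel, Finset.mul_sum]
  have height (l : List Bool) : k - 1 + displacement l = k ↔ -1 + displacement l = 0 := by grind
  simp [descents, height]

end CommSemiring

section RealFreudForm

variable {m : ℕ} {b : ℤ → ℝ}

lemma continuous_jacobiPow (j : ℕ) (n l : ℤ) :
    Continuous fun b : ℤ → ℝ => jacobiPow b j n l := by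
  induction j generalizing n with
  | zero => exact continuous_const
  | succ j ih => exact (ih _).add ((continuous_apply n).mul (ih _))

lemma continuous_freudForm (m : ℕ) (k : ℤ) : Continuous fun b : ℤ → ℝ => freudForm m b k :=
  (continuous_apply k).mul (continuous_jacobiPow _ _ _)

lemma jacobiPow_le {A : ℝ} (hb : ∀ k, b k ∈ Set.Icc 0 A) (j : ℕ) (n l : ℤ) :
    jacobiPow b j n l ≤ (1 + A) ^ j := by
  have hA : 0 ≤ A := (hb 0).1.trans (hb 0).2
  induction j generalizing n with
  | zero =>
    rw [jacobiPow, pow_zero]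
    split_ifs <;> norm_num
  | succ j ih =>
    have h : b n * jacobiPow b j (n - 1) l ≤ A * (1 + A) ^ j :=
      (mul_le_mul_of_nonneg_left (ih _) (hb n).1).trans
        (mul_le_mul_of_nonneg_right (hb n).2 (by positivity))
    rw [jacobiPow, pow_succ]
    linarith [ih (n + 1)]

lemma pow_le_freudForm (hm : m ≠ 0) (hb : ∀ k, 0 ≤ b k) (k : ℤ) :
    b k ^ m ≤ freudForm m b k := by
  rw [freudForm_eq_sum hm]
  calc b k ^ m = ((descents k (zigzag m)).map b).prod := by simp [descents_zigzag]
    _ ≤ _ := by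
      refine Finset.single_le_sum (f := fun l => ((descents k l).map b).prod)
        (fun l _ => Multiset.prod_nonneg (by simp [hb])) ?_
      obtain ⟨r, rfl⟩ := Nat.exists_eq_succ_of_ne_zero hm
      exact Finset.mem_filter.2 ⟨zigzag_mem_balancedWords _, rfl⟩

lemma freudForm_const_mul (hm : m ≠ 0) (c : ℝ) (b : ℤ → ℝ) (k : ℤ) :
    freudForm m (fun i => c * b i) k = c ^ m * freudForm m b k := by
  rw [freudForm_eq_sum hm, freudForm_eq_sum hm, Finset.mul_sum]
  exact Finset.sum_congr rfl fun l hl => descents_prod_const_mul c b k (Finset.mem_filter.1 hl).1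

end RealFreudForm

/-! ### Sums over closed paths -/

lemma hasSum_birkhoffSum {X M : Type*} [AddCommMonoid M] [TopologicalSpace M] [ContinuousAdd M]
    (e : Equiv.Perm X) {g : X → M} {a : M} (hg : HasSum g a) (n : ℕ) :
    HasSum (birkhoffSum e g n) (n • a) := by
  induction n with
  | zero =>
    rw [zero_nsmul]
    exact hasSum_zero
  | succ n ih =>
    rw [succ_nsmul]
    convert ih.add ((e ^ n).hasSum_iff.2 hg) using 2 with x
    simp [birkhoffSum_succ, Equiv.Perm.iterate_eq_pow]

section ClosedPath

variable {m : ℕ} (f g : ℤ → ℝ) (q : ClosedPath m)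

lemma firstDescentSum_eq :
    firstDescentSum f q = if q.1.1.head? = some false then f q.2 else 0 := by
  obtain ⟨⟨_ | ⟨_ | _, l⟩, hl⟩, k⟩ := q <;> simp [firstDescentSum, descents]

lemma abs_firstDescentSum_le : |firstDescentSum f q| ≤ |f q.2| := by
  rw [firstDescentSum_eq]
  split_ifs <;> simp

lemma descentSum_sub : descentSum (fun k => f k - g k) q = descentSum f q - descentSum g q :=
  Multiset.sum_map_sub

lemma descentSum_const_mul (c : ℝ) : descentSum (fun k => c * f k) q = c * descentSum f q :=
  Multiset.sum_map_mul_left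

variable {f g} in
lemma descentSum_le_descentSum (h : ∀ d, |d - q.2| ≤ 2 * m → f d ≤ g d) :
    descentSum f q ≤ descentSum g q :=
  Multiset.sum_map_le_sum_map f g fun d hd => h d <| by
    simpa [(mem_balancedWords.1 q.1.2).1] using abs_sub_le_of_mem_descents hd

lemma abs_descentSum_le : |descentSum f q| ≤ descentSum (fun k => |f k|) q := by
  simpa [descentSum] using Multiset.abs_sum_le_sum_abs (s := (descents q.2 q.1).map f)

lemma descentSum_const (c : ℝ) : descentSum (fun _ => c) q = m * c := by
  simp [descentSum, card_descents, count_false_of_mem_balancedWords q.1.2]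

lemma sq_descentSum_le : descentSum f q ^ 2 ≤ m * descentSum (fun k => f k ^ 2) q := by
  have h (s : Multiset ℝ) : s.sum ^ 2 ≤ s.card * (s.map (· ^ 2)).sum := by
    induction s using Quotient.inductionOn with | _ l =>
    simpa [← Fin.sum_univ_fun_getElem] using
      sq_sum_le_card_mul_sum_sq (s := Finset.univ) (f := fun i : Fin l.length => l[i])
  simpa [descentSum, card_descents, count_false_of_mem_balancedWords q.1.2] using
    h ((descents q.2 q.1).map f)

lemma exp_descentSum :
    exp (descentSum f q) = ((descents q.2 q.1).map fun k => exp (f k)).prod := by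
  rw [descentSum, Real.exp_multiset_sum, Multiset.map_map]
  rfl

lemma sum_exp_descentSum_mul_firstDescentSum (hm : m ≠ 0) (k : ℤ) :
    ∑ l : balancedWords m, exp (descentSum g (l, k)) * firstDescentSum f (l, k) =
      f k * freudForm m (fun i => exp (g i)) k := by
  rw [freudForm_eq_sum hm, Finset.sum_filter, Finset.mul_sum,
    ← Finset.sum_coe_sort (balancedWords m)]
  refine Finset.sum_congr rfl fun l _ => ?_
  rw [exp_descentSum, firstDescentSum_eq]
  split_ifs <;> ring

variable {f} in
lemma hasSum_mul_descentSum {Ψ : ClosedPath m → ℝ} {a : ℝ} (hΨ : ∀ q, Ψ (rotate m q) = Ψ q)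
    (h : HasSum (fun q => Ψ q * firstDescentSum f q) a) :
    HasSum (fun q => Ψ q * descentSum f q) (2 * m * a) := by
  have hiter (q : ClosedPath m) (j : ℕ) : Ψ ((rotate m)^[j] q) = Ψ q := by
    induction j with
    | zero => rfl
    | succ j ih => rw [Function.iterate_succ_apply', hΨ, ih]
  convert hasSum_birkhoffSum (rotate m) h (2 * m) using 1
  · ext q
    simp only [← birkhoffSum_firstDescentSum, birkhoffSum, hiter, Finset.mul_sum]
  · simp

lemma summable_closedPath {F : ClosedPath m → ℝ} {ρ : ℤ → ℝ} (hρ : Summable ρ)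
    (hF : ∀ q, |F q| ≤ ρ q.2) : Summable F := by
  have hρ_nonneg (k : ℤ) : 0 ≤ ρ k :=
    (abs_nonneg _).trans (hF (⟨_, zigzag_mem_balancedWords m⟩, k))
  have hone : Summable fun _ : balancedWords m => (1 : ℝ) := .of_finite
  have hsnd : Summable fun q : ClosedPath m => ρ q.2 := by
    simpa using hone.mul_of_nonneg hρ (fun _ => zero_le_one) hρ_nonneg
  exact hsnd.of_norm_bounded hF

lemma hasSum_closedPath {F : ClosedPath m → ℝ} {h : ℤ → ℝ} {a : ℝ} (hF : Summable F)
    (hFh : ∀ k, ∑ l, F (l, k) = h k) (ha : HasSum h a) : HasSum F a := by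
  have hfiber : HasSum h (∑' q, F q) :=
    ((Equiv.prodComm _ _).hasSum_iff.2 hF.hasSum).prod_fiberwise fun k =>
      hFh k ▸ hasSum_fintype fun l => F (l, k)
  rw [ha.unique hfiber]
  exact hF.hasSum

variable {f} in
lemma hasSum_descentSum (hm : m ≠ 0) {S : ℝ} (hf : ∀ k, 0 ≤ f k) (hS : HasSum f S) :
    HasSum (descentSum f : ClosedPath m → ℝ)
      (2 * m * (S * (2 * m - 1).choose (m - 1))) := by
  have hfirst : HasSum (firstDescentSum f : ClosedPath m → ℝ)
      (S * (2 * m - 1).choose (m - 1)) := by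
    have hbound (q : ClosedPath m) : |firstDescentSum f q| ≤ f q.2 :=
      (abs_firstDescentSum_le f q).trans_eq (abs_of_nonneg (hf _))
    refine hasSum_closedPath (summable_closedPath hS.summable hbound) (fun k => ?_)
      (hS.mul_right _)
    simpa [descentSum_const, freudForm_const hm] using
      sum_exp_descentSum_mul_firstDescentSum f (fun _ => 0) hm k
  simpa using hasSum_mul_descentSum (Ψ := fun _ => 1) (fun _ => rfl) (by simpa using hfirst)

end ClosedPath

/-! ### Injectivity of the Freud form -/

lemma mul_sub_le_exp_sub_exp (x y : ℝ) : exp y * (x - y) ≤ exp x - exp y := by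
  have h := mul_le_mul_of_nonneg_left (add_one_le_exp (x - y)) (exp_pos y).le
  rw [← exp_add, add_sub_cancel] at h
  linarith

section ExpBounds

variable {x y R : ℝ}

lemma abs_exp_sub_exp_le (hx : |x| ≤ R) (hy : |y| ≤ R) :
    |exp x - exp y| ≤ exp R * |x - y| := by
  wlog h : y ≤ x generalizing x y
  · rw [abs_sub_comm, abs_sub_comm x]
    exact this hy hx (le_of_not_ge h)
  rw [abs_of_nonneg (sub_nonneg.2 (exp_le_exp.2 h)), abs_of_nonneg (sub_nonneg.2 h)]
  have hR := mul_le_mul_of_nonneg_right (exp_le_exp.2 (le_of_abs_le hx)) (sub_nonneg.2 h)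
  linarith [mul_sub_le_exp_sub_exp y x]

lemma exp_neg_mul_sq_le (hx : |x| ≤ R) (hy : |y| ≤ R) :
    exp (-R) * (x - y) ^ 2 ≤ (exp x - exp y) * (x - y) := by
  wlog h : y ≤ x generalizing x y
  · have := this hy hx (le_of_not_ge h)
    linarith
  have hR := exp_le_exp.2 (neg_le_of_abs_le hy)
  calc exp (-R) * (x - y) ^ 2 ≤ exp y * (x - y) * (x - y) := by
        rw [sq, ← mul_assoc]
        have := sub_nonneg.2 h
        gcongr
    _ ≤ (exp x - exp y) * (x - y) :=
        mul_le_mul_of_nonneg_right (mul_sub_le_exp_sub_exp x y) (sub_nonneg.2 h)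

end ExpBounds

lemma exists_summable_slowly_varying (n : ℕ) {η : ℝ} (hη : 0 < η) :
    ∃ ρ : ℤ → ℝ, (∀ k, 0 < ρ k) ∧ Summable ρ ∧
      ∀ k d : ℤ, |d - k| ≤ n → |ρ d - ρ k| ≤ η * ρ k := by
  set ε := min 1 η / (2 * (n + 1)) with hε_def
  have hε : 0 < ε := by positivity
  refine ⟨fun k => exp (-ε * |(k : ℝ)|), fun k => exp_pos _, ?_, fun k d hd => ?_⟩
  · have hnat : Summable fun j : ℕ => exp (j * -ε) := summable_exp_nat_mul_iff.2 (neg_lt_zero.2 hε)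
    refine .of_nat_of_neg ?_ ?_ <;> simpa [mul_comm] using hnat
  · set x := ε * (|(k : ℝ)| - |(d : ℝ)|) with hx_def
    have hx : 2 * |x| ≤ min 1 η := by
      have hkd : |(|(k : ℝ)| - |(d : ℝ)|)| ≤ n + 1 := by
        have := abs_abs_sub_abs_le (k : ℝ) d
        have : |(k : ℝ) - d| ≤ n := by rw [abs_sub_comm]; exact_mod_cast hd
        linarith
      calc 2 * |x| = 2 * (ε * |(|(k : ℝ)| - |(d : ℝ)|)|) := by rw [hx_def, abs_mul, abs_of_pos hε]
        _ ≤ 2 * (ε * (n + 1)) := by gcongr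
        _ = min 1 η := by rw [hε_def]; field_simp
    have hexp : exp (-ε * |(d : ℝ)|) = exp (-ε * |(k : ℝ)|) * exp x := by
      rw [← exp_add, hx_def]
      ring_nf
    calc |exp (-ε * |(d : ℝ)|) - exp (-ε * |(k : ℝ)|)|
        = |exp x - 1| * exp (-ε * |(k : ℝ)|) := by
          rw [hexp, ← mul_sub_one, abs_mul, abs_of_pos (exp_pos _), mul_comm]
      _ ≤ η * exp (-ε * |(k : ℝ)|) := by
          gcongr
          have hx_le : |x| ≤ 1 := by linarith [hx.trans (min_le_left _ _), abs_nonneg x]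
          exact (abs_exp_sub_one_le hx_le).trans (hx.trans (min_le_right _ _))

/-- The difference of the weights of a closed path, that is the products over its descents, with
respect to the two sequences `exp ∘ w` and `exp ∘ v`. -/
noncomputable def weightDiff {m : ℕ} (w v : ℤ → ℝ) (q : ClosedPath m) : ℝ :=
  exp (descentSum w q) - exp (descentSum v q)

lemma summable_mul_sq {ι : Type*} {ρ u : ι → ℝ} {A : ℝ} (hρ_nonneg : ∀ i, 0 ≤ ρ i)
    (hρ : Summable ρ) (hu : ∀ i, |u i| ≤ A) : Summable fun i => ρ i * u i ^ 2 :=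
  .of_nonneg_of_le (fun i => mul_nonneg (hρ_nonneg i) (sq_nonneg _))
    (fun i => mul_le_mul_of_nonneg_left
      (sq_le_sq' (neg_le_of_abs_le (hu i)) (le_of_abs_le (hu i))) (hρ_nonneg i))
    (hρ.mul_right (A ^ 2))

section Injectivity

variable {m : ℕ} {w v ρ : ℤ → ℝ} {M η : ℝ}

lemma abs_descentSum_le_mul (hw : ∀ k, |w k| ≤ M) (q : ClosedPath m) :
    |descentSum w q| ≤ m * M :=
  calc |descentSum w q| ≤ descentSum (fun k => |w k|) q := abs_descentSum_le w q
    _ ≤ descentSum (fun _ => M) q := descentSum_le_descentSum q fun d _ => hw d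
    _ = m * M := descentSum_const q M

lemma abs_weightDiff_le (hw : ∀ k, |w k| ≤ M) (hv : ∀ k, |v k| ≤ M) (q : ClosedPath m) :
    |weightDiff w v q| ≤ exp (m * M) * |descentSum (fun k => w k - v k) q| := by
  rw [descentSum_sub]
  exact abs_exp_sub_exp_le (abs_descentSum_le_mul hw q) (abs_descentSum_le_mul hv q)

lemma le_weightDiff_mul (hw : ∀ k, |w k| ≤ M) (hv : ∀ k, |v k| ≤ M) (q : ClosedPath m) :
    exp (-(m * M)) * descentSum (fun k => w k - v k) q ^ 2 ≤
      weightDiff w v q * descentSum (fun k => w k - v k) q := by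
  rw [descentSum_sub]
  exact exp_neg_mul_sq_le (abs_descentSum_le_mul hw q) (abs_descentSum_le_mul hv q)

lemma abs_descentSum_mul_sub_le {u : ℤ → ℝ} (q : ClosedPath m)
    (hρ : ∀ d, |d - q.2| ≤ 2 * m → |ρ d - ρ q.2| ≤ η * ρ q.2) :
    |descentSum (fun k => ρ k * u k) q - ρ q.2 * descentSum u q| ≤
      η * ρ q.2 * descentSum (fun k => |u k|) q := by
  rw [← descentSum_const_mul, ← descentSum_sub, ← descentSum_const_mul]
  refine (abs_descentSum_le _ q).trans (descentSum_le_descentSum q fun d hd => ?_)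
  rw [← sub_mul, abs_mul]
  exact mul_le_mul_of_nonneg_right (hρ d hd) (abs_nonneg _)

lemma mul_sq_descentSum_abs_le {u : ℤ → ℝ} (q : ClosedPath m) (hρ_nonneg : ∀ k, 0 ≤ ρ k)
    (hη : η ≤ 1 / 2) (hρ : ∀ d, |d - q.2| ≤ 2 * m → |ρ d - ρ q.2| ≤ η * ρ q.2) :
    ρ q.2 * descentSum (fun k => |u k|) q ^ 2 ≤
      2 * m * descentSum (fun k => ρ k * u k ^ 2) q := by
  have hdouble : descentSum (fun k => ρ q.2 * u k ^ 2) q ≤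
      descentSum (fun k => 2 * (ρ k * u k ^ 2)) q := by
    refine descentSum_le_descentSum q fun d hd => ?_
    have h : ρ q.2 ≤ 2 * ρ d := by
      have := neg_le_of_abs_le (hρ d hd)
      nlinarith [hρ_nonneg q.2]
    nlinarith [sq_nonneg (u d)]
  rw [descentSum_const_mul, descentSum_const_mul] at hdouble
  have hsq := sq_descentSum_le (fun k => |u k|) q
  simp only [sq_abs] at hsq
  calc ρ q.2 * descentSum (fun k => |u k|) q ^ 2
      ≤ ρ q.2 * (m * descentSum (fun k => u k ^ 2) q) :=
        mul_le_mul_of_nonneg_left hsq (hρ_nonneg _)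
    _ = m * (ρ q.2 * descentSum (fun k => u k ^ 2) q) := by ring
    _ ≤ m * (2 * descentSum (fun k => ρ k * u k ^ 2) q) := by gcongr
    _ = 2 * m * descentSum (fun k => ρ k * u k ^ 2) q := by ring

lemma le_weightDiff_mul_descentSum (hw : ∀ k, |w k| ≤ M) (hv : ∀ k, |v k| ≤ M)
    (hρ_nonneg : ∀ k, 0 ≤ ρ k) (hη : η ∈ Set.Icc 0 (1 / 2)) (q : ClosedPath m)
    (hρ : ∀ d, |d - q.2| ≤ 2 * m → |ρ d - ρ q.2| ≤ η * ρ q.2) :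
    exp (-(m * M)) * (ρ q.2 * descentSum (fun k => w k - v k) q ^ 2) -
        2 * m * η * exp (m * M) * descentSum (fun k => ρ k * (w k - v k) ^ 2) q ≤
      weightDiff w v q * descentSum (fun k => ρ k * (w k - v k)) q := by
  set u : ℤ → ℝ := fun k => w k - v k
  set T := descentSum (fun k => |u k|) q
  set δ := descentSum (fun k => ρ k * u k) q - ρ q.2 * descentSum u q with hδ_def
  have hmain := mul_le_mul_of_nonneg_left (le_weightDiff_mul hw hv q) (hρ_nonneg q.2)
  have hΨ : |weightDiff w v q| ≤ exp (m * M) * T :=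
    (abs_weightDiff_le hw hv q).trans
      (mul_le_mul_of_nonneg_left (abs_descentSum_le u q) (exp_pos _).le)
  have herror : |weightDiff w v q * δ| ≤
      2 * m * η * exp (m * M) * descentSum (fun k => ρ k * u k ^ 2) q :=
    calc |weightDiff w v q * δ| ≤ exp (m * M) * T * (η * ρ q.2 * T) := by
          rw [abs_mul]
          exact mul_le_mul hΨ (abs_descentSum_mul_sub_le q hρ) (abs_nonneg _)
            ((abs_nonneg _).trans hΨ)
      _ = η * exp (m * M) * (ρ q.2 * T ^ 2) := by ring
      _ ≤ η * exp (m * M) * (2 * m * descentSum (fun k => ρ k * u k ^ 2) q) := by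
          exact mul_le_mul_of_nonneg_left (mul_sq_descentSum_abs_le q hρ_nonneg hη.2 hρ)
            (mul_nonneg hη.1 (exp_pos _).le)
      _ = _ := by ring
  have hsplit : descentSum (fun k => ρ k * u k) q = ρ q.2 * descentSum u q + δ := by
    rw [hδ_def]; ring
  rw [hsplit]
  linarith [neg_le_of_abs_le herror]

lemma hasSum_weightDiff_mul_descentSum (hm : m ≠ 0) (hw : ∀ k, |w k| ≤ M) (hv : ∀ k, |v k| ≤ M)
    (hρ_nonneg : ∀ k, 0 ≤ ρ k) (hρ : Summable ρ)
    (hwv : ∀ k, freudForm m (fun i => exp (w i)) k = freudForm m (fun i => exp (v i)) k) :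
    HasSum (fun q : ClosedPath m =>
      weightDiff w v q * descentSum (fun k => ρ k * (w k - v k)) q) 0 := by
  set f : ℤ → ℝ := fun k => ρ k * (w k - v k)
  have hfiber (k : ℤ) : ∑ l : balancedWords m,
      weightDiff w v (l, k) * firstDescentSum f (l, k) = 0 := by
    simp_rw [weightDiff, sub_mul]
    rw [Finset.sum_sub_distrib, sum_exp_descentSum_mul_firstDescentSum f w hm,
      sum_exp_descentSum_mul_firstDescentSum f v hm, hwv, sub_self]
  have hbound (q : ClosedPath m) :
      |weightDiff w v q * firstDescentSum f q| ≤
        exp (m * M) * (m * (2 * M)) * (2 * M) * ρ q.2 := by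
    have hu (k : ℤ) : |w k - v k| ≤ 2 * M :=
      (abs_sub (w k) (v k)).trans (by linarith [hw k, hv k])
    have hΨ := (abs_weightDiff_le hw hv q).trans
      (mul_le_mul_of_nonneg_left (abs_descentSum_le_mul hu q) (exp_pos _).le)
    have hf : |firstDescentSum f q| ≤ 2 * M * ρ q.2 := by
      refine (abs_firstDescentSum_le f q).trans ?_
      rw [abs_mul, abs_of_nonneg (hρ_nonneg _), mul_comm]
      exact mul_le_mul_of_nonneg_right (hu _) (hρ_nonneg _)
    rw [abs_mul, mul_assoc _ (2 * M)]
    exact mul_le_mul hΨ hf (abs_nonneg _) ((abs_nonneg _).trans hΨ)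
  have hfirst := hasSum_closedPath (summable_closedPath (hρ.mul_left _) hbound) hfiber hasSum_zero
  have hrotate (q : ClosedPath m) : weightDiff w v (rotate m q) = weightDiff w v q := by
    simp only [weightDiff, descentSum_rotate]
  simpa using hasSum_mul_descentSum hrotate hfirst

lemma tsum_mul_sq_le {u : ℤ → ℝ} (hm : m ≠ 0) (hρ_nonneg : ∀ k, 0 ≤ ρ k)
    (hsum : Summable fun q : ClosedPath m => ρ q.2 * descentSum u q ^ 2)
    (hu : Summable fun k => ρ k * u k ^ 2) :
    ∑' k, ρ k * u k ^ 2 ≤ ∑' q : ClosedPath m, ρ q.2 * descentSum u q ^ 2 := by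
  let zigzagFrom (k : ℤ) : ClosedPath m := (⟨zigzag m, zigzag_mem_balancedWords m⟩, k)
  refine hu.tsum_le_tsum_of_inj zigzagFrom (fun _ _ h => congrArg Prod.snd h)
    (fun q _ => mul_nonneg (hρ_nonneg _) (sq_nonneg _)) (fun k => ?_) hsum
  have hzigzag : descentSum u (zigzagFrom k) = m * u k := by
    simp [descentSum, zigzagFrom, descents_zigzag]
  have hm_one : (1 : ℝ) ≤ m ^ 2 := one_le_pow₀ (by exact_mod_cast Nat.one_le_iff_ne_zero.2 hm)
  rw [hzigzag, mul_pow]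
  exact mul_le_mul_of_nonneg_left (le_mul_of_one_le_left (sq_nonneg _) hm_one) (hρ_nonneg k)

lemma tsum_mul_sq_sub_le (hm : m ≠ 0) (hw : ∀ k, |w k| ≤ M) (hv : ∀ k, |v k| ≤ M)
    (hρ_nonneg : ∀ k, 0 ≤ ρ k) (hρ : Summable ρ) (hη : η ∈ Set.Icc 0 (1 / 2))
    (hslow : ∀ k d : ℤ, |d - k| ≤ 2 * m → |ρ d - ρ k| ≤ η * ρ k)
    (hwv : ∀ k, freudForm m (fun i => exp (w i)) k = freudForm m (fun i => exp (v i)) k) :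
    exp (-(m * M)) * ∑' k, ρ k * (w k - v k) ^ 2 ≤
      2 * m * η * exp (m * M) *
        (2 * m * ((∑' k, ρ k * (w k - v k) ^ 2) * (2 * m - 1).choose (m - 1))) := by
  set u : ℤ → ℝ := fun k => w k - v k
  have hu (k : ℤ) : |u k| ≤ 2 * M := (abs_sub (w k) (v k)).trans (by linarith [hw k, hv k])
  have hsum_u := summable_mul_sq hρ_nonneg hρ hu
  have hsum_descent := hasSum_descentSum hm
    (fun k => mul_nonneg (hρ_nonneg k) (sq_nonneg (u k))) hsum_u.hasSum
  have hsum_sq : Summable fun q : ClosedPath m => ρ q.2 * descentSum u q ^ 2 :=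
    summable_mul_sq (fun q => hρ_nonneg q.2)
      (summable_closedPath hρ fun q => (abs_of_nonneg (hρ_nonneg q.2)).le)
      (abs_descentSum_le_mul hu)
  have hzero := hasSum_weightDiff_mul_descentSum hm hw hv hρ_nonneg hρ hwv
  have hle := hasSum_le (fun q => le_weightDiff_mul_descentSum hw hv hρ_nonneg hη q (hslow q.2))
    ((hsum_sq.hasSum.mul_left _).sub (hsum_descent.mul_left _)) hzero
  have hzigzag := mul_le_mul_of_nonneg_left (tsum_mul_sq_le hm hρ_nonneg hsum_sq hsum_u)
    (exp_pos (-(m * M))).le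
  linarith

lemma eq_of_freudForm_exp_eq (hm : m ≠ 0) (hw : ∀ k, |w k| ≤ M) (hv : ∀ k, |v k| ≤ M)
    (hwv : ∀ k, freudForm m (fun i => exp (w i)) k = freudForm m (fun i => exp (v i)) k) :
    w = v := by
  set K : ℝ := 2 * m * exp (m * M) * (2 * m * (2 * m - 1).choose (m - 1)) with hK_def
  set η : ℝ := min (1 / 2) (exp (-(m * M)) / (K + 1))
  have hη : 0 < η := by positivity
  obtain ⟨ρ, hρ_pos, hρ, hslow⟩ := exists_summable_slowly_varying (2 * m) hη
  set S := ∑' k, ρ k * (w k - v k) ^ 2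
  have hterm (k : ℤ) : 0 ≤ ρ k * (w k - v k) ^ 2 := mul_nonneg (hρ_pos k).le (sq_nonneg _)
  have hsum : Summable fun k => ρ k * (w k - v k) ^ 2 :=
    summable_mul_sq (fun k => (hρ_pos k).le) hρ fun k => abs_sub (w k) (v k) |>.trans
      (add_le_add (hw k) (hv k))
  have hle : exp (-(m * M)) * S ≤ η * K * S := by
    have := tsum_mul_sq_sub_le hm hw hv (fun k => (hρ_pos k).le) hρ ⟨hη.le, min_le_left _ _⟩
      (by exact_mod_cast hslow) hwv
    calc _ ≤ _ := this
      _ = _ := by rw [hK_def]; ring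
  have hlt : η * K < exp (-(m * M)) := by
    calc η * K < η * (K + 1) := by gcongr; linarith
      _ ≤ exp (-(m * M)) := (le_div_iff₀ (by positivity)).1 (min_le_right _ _)
  have hS : S = 0 := le_antisymm (by nlinarith) (tsum_nonneg hterm)
  ext k
  have hzero : ρ k * (w k - v k) ^ 2 = 0 :=
    le_antisymm ((hsum.le_tsum k fun j _ => hterm j).trans_eq hS) (hterm k)
  simpa [(hρ_pos k).ne', sub_eq_zero] using hzero

end Injectivity

theorem freudForm_injOn_Icc {m : ℕ} (hm : m ≠ 0) {δ A : ℝ} (hδ : 0 < δ) :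
    Set.InjOn (freudForm m) {b : ℤ → ℝ | ∀ k, b k ∈ Set.Icc δ A} := by
  intro x hx y hy hxy
  have exp_log {b : ℤ → ℝ} (hb : ∀ k, b k ∈ Set.Icc δ A) : (fun k => exp (log (b k))) = b :=
    funext fun k => Real.exp_log (hδ.trans_le (hb k).1)
  have abs_log_le {b : ℤ → ℝ} (hb : ∀ k, b k ∈ Set.Icc δ A) (k : ℤ) :
      |log (b k)| ≤ max |log δ| |log A| :=
    abs_le_max_abs_abs (log_le_log hδ (hb k).1) (log_le_log (hδ.trans_le (hb k).1) (hb k).2)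
  have hlog := eq_of_freudForm_exp_eq hm (abs_log_le hx) (abs_log_le hy) fun k => by
    rw [exp_log hx, exp_log hy, hxy]
  rw [← exp_log hx, ← exp_log hy]
  exact funext fun k => congrArg exp (congrFun hlog k)

/-! ### Asymptotics of solutions of a Freud equation -/

section Asymptotics

variable {m : ℕ} {L : ℝ}

lemma eq_const_of_freudForm_eq (hm : m ≠ 0) (hL : 0 < L) {y : ℤ → ℝ} {A : ℝ}
    (hy : ∀ k, y k ∈ Set.Icc 0 A)
    (h : ∀ k, freudForm m y k = (2 * m - 1).choose (m - 1) * L ^ m) : y = fun _ => L := by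
  have hA : 0 ≤ A := (hy 0).1.trans (hy 0).2
  have hchoose : 0 < (2 * m - 1).choose (m - 1) := Nat.choose_pos (by omega)
  set δ := (2 * m - 1).choose (m - 1) * L ^ m / (1 + A) ^ (2 * m - 1)
  have hδ (k : ℤ) : δ ≤ y k := by
    rw [div_le_iff₀ (by positivity), ← h k, freudForm]
    exact mul_le_mul_of_nonneg_left (jacobiPow_le hy _ _ _) (hy k).1
  refine freudForm_injOn_Icc hm (δ := min δ L) (A := max A L) (by positivity)
    (fun k => ⟨min_le_of_left_le (hδ k), le_max_of_le_left (hy k).2⟩)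
    (fun _ => ⟨min_le_right _ _, le_max_right _ _⟩) (funext fun k => ?_)
  rw [h, freudForm_const hm]

lemma tendsto_of_tendsto_freudForm (hm : m ≠ 0) (hL : 0 < L) {ι : Type*} {F : Filter ι}
    {x : ι → ℤ → ℝ} (hx : ∀ i k, 0 ≤ x i k)
    (h : ∀ k, Tendsto (fun i => freudForm m (x i) k) F
      (nhds ((2 * m - 1).choose (m - 1) * L ^ m))) (k : ℤ) :
    Tendsto (fun i => x i k) F (nhds L) := by
  set c : ℝ := (2 * m - 1).choose (m - 1) * L ^ m
  have hc : 0 ≤ c := by positivity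
  have hbounded (k : ℤ) : ∀ᶠ i in F, x i k ∈ Set.Icc 0 (c + 1) := by
    filter_upwards [(h k).eventually (gt_mem_nhds (lt_add_one c))] with i hi
    refine ⟨hx i k, le_of_not_gt fun hlt => ?_⟩
    have := le_self_pow₀ (by linarith : 1 ≤ x i k) hm
    linarith [pow_le_freudForm hm (hx i) k]
  rw [tendsto_iff_ultrafilter]
  intro G hG
  have hcluster (k : ℤ) : ∃ y ∈ Set.Icc 0 (c + 1), Tendsto (fun i => x i k) G (nhds y) :=
    isCompact_Icc.ultrafilter_le_nhds (G.map fun i => x i k)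
      (le_principal_iff.2 (hG (hbounded k)))
  choose y hy hy_lim using hcluster
  have hfreud (k : ℤ) : freudForm m y k = c :=
    tendsto_nhds_unique
      (((continuous_freudForm m k).tendsto y).comp (tendsto_pi_nhds.2 hy_lim)) ((h k).mono_left hG)
  have hyL := eq_const_of_freudForm_eq hm hL hy hfreud
  simpa only [hyL] using hy_lim k

theorem tendsto_div_rpow_of_tendsto_freudForm (hm : m ≠ 0) (hL : 0 < L) {b : ℤ → ℝ}
    (hb : ∀ k, 0 ≤ b k)
    (h : Tendsto (fun n : ℕ => freudForm m b n / n) atTop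
      (nhds ((2 * m - 1).choose (m - 1) * L ^ m))) :
    Tendsto (fun n : ℕ => b n / (n : ℝ) ^ ((1 : ℝ) / m)) atTop (nhds L) := by
  set x : ℕ → ℤ → ℝ := fun n k => ((n : ℝ) ^ ((1 : ℝ) / m))⁻¹ * b (n + k) with hx_def
  have hx (n : ℕ) (k : ℤ) : 0 ≤ x n k := mul_nonneg (by positivity) (hb _)
  have hfreud (n : ℕ) (k : ℤ) : freudForm m (x n) k = (n : ℝ)⁻¹ * freudForm m b (n + k) := by
    rw [hx_def, freudForm_const_mul hm, freudForm_shift, inv_pow, one_div,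
      Real.rpow_inv_natCast_pow n.cast_nonneg hm]
  have hint : Tendsto (fun n : ℤ => freudForm m b n / n) atTop
      (nhds ((2 * m - 1).choose (m - 1) * L ^ m)) := by
    rw [← Nat.map_cast_int_atTop, tendsto_map'_iff]
    simpa [Function.comp_def] using h
  have hlim (k : ℤ) : Tendsto (fun n => freudForm m (x n) k) atTop
      (nhds ((2 * m - 1).choose (m - 1) * L ^ m)) := by
    have hshift : Tendsto (fun n : ℕ => (n : ℤ) + k) atTop atTop :=
      tendsto_atTop_add_const_right _ k tendsto_natCast_atTop_atTop
    have hratio : Tendsto (fun n : ℕ => 1 + (k : ℝ) / n) atTop (nhds 1) := by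
      simpa using (tendsto_const_div_atTop_nhds_zero_nat (k : ℝ)).const_add 1
    have hprod := (hint.comp hshift).mul hratio
    rw [mul_one] at hprod
    refine hprod.congr' ?_
    filter_upwards [eventually_gt_atTop 0, hshift.eventually_gt_atTop 0] with n hn hnk
    have hn' : (n : ℝ) ≠ 0 := by positivity
    have hnk' : (n : ℝ) + k ≠ 0 := by exact_mod_cast hnk.ne'
    rw [hfreud, Function.comp_apply]
    push_cast
    field_simp
  simpa [hx_def, div_eq_inv_mul] using tendsto_of_tendsto_freudForm hm hL hx hlim 0

lemma tendsto_div_natCast_of_sq_le {u : ℕ → ℝ} {A B : ℝ} (hu : ∀ n, 0 ≤ u n)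
    (h : ∀ n, u n ^ 2 ≤ A + B * n) : Tendsto (fun n => u n / n) atTop (nhds 0) := by
  have hbound : Tendsto (fun n : ℕ => A / n * (1 / n) + B * (1 / n)) atTop (nhds 0) := by
    have hone := tendsto_one_div_atTop_nhds_zero_nat (𝕜 := ℝ)
    simpa using ((tendsto_const_div_atTop_nhds_zero_nat A).mul hone).add (hone.const_mul B)
  have hsq : Tendsto (fun n => (u n / n) ^ 2) atTop (nhds 0) := by
    refine squeeze_zero' (.of_forall fun n => sq_nonneg _) ?_ hbound
    filter_upwards [eventually_gt_atTop 0] with n hn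
    rw [div_pow, div_le_iff₀ (by positivity)]
    refine (h n).trans_eq ?_
    field_simp
  have hsqrt := (Real.continuous_sqrt.tendsto 0).comp hsq
  rw [Real.sqrt_zero] at hsqrt
  exact hsqrt.congr fun n => Real.sqrt_sq (div_nonneg (hu n) n.cast_nonneg)

lemma tendsto_freudForm_div_of_abs_sub_le (hm : 2 ≤ m) {b : ℤ → ℝ} {t E : ℝ}
    (hb : ∀ k, 0 ≤ b k)
    (hfreud : ∀ n : ℕ, |2 * m * freudForm m b n - 2 * t * b n - n| ≤ E) :
    Tendsto (fun n : ℕ => freudForm m b n / n) atTop (nhds (1 / (2 * m))) := by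
  have hm_pos : (2 : ℝ) ≤ m := by exact_mod_cast hm
  have hsq (n : ℕ) : b n ^ 2 ≤ (2 + 2 * E + 4 * t ^ 2) + 2 * n := by
    have hpow : b n ^ 2 ≤ 1 + freudForm m b n := by
      have hpow_le := pow_le_freudForm (by omega : m ≠ 0) hb n
      rcases le_total (b n) 1 with h | h
      · nlinarith [pow_le_one₀ (n := 2) (hb n) h, pow_nonneg (hb n) m]
      · linarith [pow_le_pow_right₀ h hm]
    have hfreud_nonneg := (pow_nonneg (hb n) m).trans (pow_le_freudForm (by omega : m ≠ 0) hb n)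
    have := le_of_abs_le (hfreud n)
    nlinarith [sq_nonneg (b n - 2 * t)]
  have hb_lim : Tendsto (fun n : ℕ => b n / n) atTop (nhds 0) :=
    tendsto_div_natCast_of_sq_le (fun n => hb n) hsq
  have herror : Tendsto (fun n : ℕ => (2 * m * freudForm m b n - 2 * t * b n - n) / n) atTop
      (nhds 0) := by
    refine squeeze_zero_norm (fun n => ?_) (tendsto_const_div_atTop_nhds_zero_nat E)
    rw [norm_div, Real.norm_natCast]
    exact div_le_div_of_nonneg_right (hfreud n) n.cast_nonneg
  have hsum := (((hb_lim.const_mul (2 * t)).add herror).const_add 1).div_const (2 * m)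
  rw [mul_zero, add_zero, add_zero] at hsum
  refine hsum.congr' ?_
  filter_upwards [eventually_gt_atTop 0] with n hn
  field_simp
  ring

end Asymptotics

/-! ### The Freud equation -/

/-- `P` is the sequence of monic orthogonal polynomials of the moment functional `ℓ`, and `b`
extends its recurrence coefficients. Only the values of `b` at nonnegative integers matter, and
`b 0 = 0` makes the recurrence hold at `n = 0`, where `n - 1` is truncated. -/
structure IsMonicOrthogonal {R : Type*} [CommRing R] (ℓ : R[X] →ₗ[R] R) (P : ℕ → R[X])
    (b : ℤ → R) : Prop where
  monic (n : ℕ) : (P n).Monic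
  natDegree_eq (n : ℕ) : (P n).natDegree = n
  orthogonal (i j : ℕ) : i ≠ j → ℓ (P i * P j) = 0
  coeff_zero : b 0 = 0
  X_mul (n : ℕ) : X * P n = P (n + 1) + b n • P (n - 1)

namespace IsMonicOrthogonal

variable {R : Type*} [CommRing R] {ℓ : R[X] →ₗ[R] R} {P : ℕ → R[X]} {b : ℤ → R}
  (h : IsMonicOrthogonal ℓ P b)
include h

lemma zero_eq_one : P 0 = 1 :=
  eq_one_of_monic_natDegree_zero (h.monic 0) (h.natDegree_eq 0)

lemma map_X_pow_mul_mul (j n l : ℕ) :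
    ℓ (X ^ j * P n * P l) = jacobiPow b j n l * ℓ (P l * P l) := by
  induction j generalizing n with
  | zero =>
    simp only [pow_zero, one_mul, jacobiPow, Nat.cast_inj]
    split_ifs with hnl
    · rw [hnl, one_mul]
    · rw [h.orthogonal n l hnl, zero_mul]
  | succ j ih =>
    have hrec : X ^ (j + 1) * P n * P l =
        X ^ j * P (n + 1) * P l + b n • (X ^ j * P (n - 1) * P l) := by
      rw [pow_succ, mul_assoc _ X, h.X_mul, mul_add, add_mul, mul_smul_comm, smul_mul_assoc]
    rw [hrec, map_add, map_smul, ih, ih, jacobiPow, Nat.cast_succ, smul_eq_mul]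
    rcases n with _ | n
    · simp [h.coeff_zero]
    · simp only [Nat.cast_add, Nat.cast_one, add_tsub_cancel_right]
      ring

lemma norm_succ (n : ℕ) : ℓ (P (n + 1) * P (n + 1)) = b (n + 1) * ℓ (P n * P n) := by
  have hup : ℓ (X * P n * P (n + 1)) = ℓ (P (n + 1) * P (n + 1)) := by
    rw [h.X_mul, add_mul, map_add, smul_mul_assoc, map_smul,
      h.orthogonal (n - 1) (n + 1) (by omega), smul_zero, add_zero]
  have hdown : ℓ (X * P (n + 1) * P n) = b (n + 1) * ℓ (P n * P n) := by
    rw [h.X_mul, add_mul, map_add, smul_mul_assoc, map_smul, h.orthogonal (n + 1 + 1) n (by omega),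
      zero_add, Nat.add_sub_cancel, smul_eq_mul, Nat.cast_succ]
  rw [← hup, ← hdown, mul_right_comm]

lemma norm_ne_zero [IsDomain R] (hℓ : ℓ 1 ≠ 0) (hb : ∀ n : ℕ, b (n + 1) ≠ 0) (n : ℕ) :
    ℓ (P n * P n) ≠ 0 := by
  induction n with
  | zero => rwa [h.zero_eq_one, mul_one]
  | succ n ih =>
    rw [h.norm_succ]
    exact mul_ne_zero (hb n) ih

lemma map_mul_eq_coeff_mul {n : ℕ} {q : R[X]} (hq : q.natDegree ≤ n) :
    ℓ (q * P n) = q.coeff n * ℓ (P n * P n) := by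
  have hX (i : ℕ) : ℓ (X ^ i * P n) = jacobiPow b i 0 n * ℓ (P n * P n) := by
    simpa [h.zero_eq_one] using h.map_X_pow_mul_mul i 0 n
  have hlow (i : ℕ) (hi : i ∈ Finset.range n) : q.coeff i * ℓ (X ^ i * P n) = 0 := by
    rw [hX, jacobiPow_eq_zero_of_lt b (by simpa using hi), zero_mul, mul_zero]
  have htop : jacobiPow b n 0 n = 1 := by simpa using jacobiPow_add_natCast b n 0
  conv_lhs => rw [q.as_sum_range_C_mul_X_pow' (Nat.lt_succ_of_le hq)]
  simp only [Finset.sum_mul, map_sum, ← smul_eq_C_mul, smul_mul_assoc, map_smul, smul_eq_mul]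
  rw [Finset.sum_range_succ, Finset.sum_eq_zero hlow, zero_add, hX, htop, one_mul]

lemma map_X_mul_derivative_mul (n : ℕ) :
    ℓ (X * derivative (P n) * P n) = n * ℓ (P n * P n) := by
  rcases n with _ | n
  · simp [h.zero_eq_one]
  · have hlead : (P (n + 1)).coeff (n + 1) = 1 := by
      simpa [h.natDegree_eq] using (h.monic (n + 1)).coeff_natDegree
    rw [h.map_mul_eq_coeff_mul, coeff_X_mul, coeff_derivative, hlead, one_mul, Nat.cast_succ]
    have := natDegree_derivative_le (P (n + 1))
    rw [h.natDegree_eq] at this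
    exact natDegree_mul_le.trans (by have := natDegree_X_le (R := R); omega)

lemma jacobiPow_diag [IsDomain R] {m : ℕ} (hm : m ≠ 0) (hℓ : ℓ 1 ≠ 0) (hb : ∀ n : ℕ, b (n + 1) ≠ 0)
    (n : ℕ) :
    jacobiPow b (2 * m) n n = freudForm m b n + freudForm m b (n + 1) := by
  obtain ⟨r, hr⟩ : ∃ r, 2 * m = r + 1 := ⟨2 * m - 1, by omega⟩
  have hsymm : jacobiPow b r (n + 1) n = b (n + 1) * jacobiPow b r n (n + 1) := by
    apply mul_right_cancel₀ (h.norm_ne_zero hℓ hb n)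
    have hup := h.map_X_pow_mul_mul r n (n + 1)
    have hdown := h.map_X_pow_mul_mul r (n + 1) n
    rw [mul_right_comm, hdown, h.norm_succ] at hup
    push_cast at hup
    rw [hup]
    ring
  rw [freudForm, freudForm, hr, jacobiPow, hsymm, Nat.add_sub_cancel, add_sub_cancel_right,
    add_comm]

variable [IsDomain R] {m : ℕ} {t κ : R}

/-- The functional of the weight `|x| ^ κ * exp (t * x ^ 2 - x ^ (2 * m))` satisfies `hpearson`, by
integration by parts. -/
lemma string_equation (hm : m ≠ 0) (hℓ : ℓ 1 ≠ 0) (hb : ∀ n : ℕ, b (n + 1) ≠ 0)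
    (hpearson : ∀ q, ℓ (X * derivative q) =
      2 * m * ℓ (X ^ (2 * m) * q) - 2 * t * ℓ (X ^ 2 * q) - (κ + 1) * ℓ q) (n : ℕ) :
    2 * m * (freudForm m b n + freudForm m b (n + 1)) =
      2 * n + κ + 1 + 2 * t * (b n + b (n + 1)) := by
  have hderiv : ℓ (X * derivative (P n * P n)) = 2 * (n * ℓ (P n * P n)) := by
    rw [derivative_mul, ← h.map_X_mul_derivative_mul, two_mul, ← map_add]
    ring_nf
  have hquad : jacobiPow b 2 n n = b n + b (n + 1) := by
    have hup : 1 + ((n : ℤ) + 1) ≠ n := by omega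
    have hdown : (n : ℤ) - 1 - 1 ≠ n := by omega
    simp [jacobiPow, hup, hdown, add_comm]
  have hstring := hpearson (P n * P n)
  rw [hderiv, ← mul_assoc (X ^ (2 * m)), ← mul_assoc (X ^ 2), h.map_X_pow_mul_mul,
    h.map_X_pow_mul_mul, h.jacobiPow_diag hm hℓ hb, hquad] at hstring
  apply mul_right_cancel₀ (h.norm_ne_zero hℓ hb n)
  linear_combination -hstring

theorem freud_equation (hm : m ≠ 0) (hℓ : ℓ 1 ≠ 0) (hb : ∀ n : ℕ, b (n + 1) ≠ 0)
    (hpearson : ∀ q, ℓ (X * derivative q) =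
      2 * m * ℓ (X ^ (2 * m) * q) - 2 * t * ℓ (X ^ 2 * q) - (κ + 1) * ℓ q) (n : ℕ) :
    2 * m * freudForm m b n = 2 * t * b n + n + if Even n then 0 else κ := by
  induction n with
  | zero => simp [freudForm, h.coeff_zero]
  | succ n ih =>
    have hstring := h.string_equation hm hℓ hb hpearson n
    rw [Nat.cast_succ, Nat.cast_succ]
    by_cases hn : Even n
    · simp only [hn, if_true, Nat.even_add_one, not_true, if_false] at ih ⊢
      linear_combination hstring - ih
    · simp only [hn, if_false, Nat.even_add_one, not_false_iff, if_true] at ih ⊢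
      linear_combination hstring - ih

end IsMonicOrthogonal

/-! ### The Pearson equation of the generalised Freud weight -/

/-- The moment functional `p ↦ ∫ p w` of a weight `w` with finite moments. -/
noncomputable def weightFunctional (w : ℝ → ℝ)
    (hw : ∀ p : ℝ[X], Integrable fun x => p.eval x * w x) :
    ℝ[X] →ₗ[ℝ] ℝ where
  toFun p := ∫ x, p.eval x * w x
  map_add' p q := by
    simp only [eval_add, add_mul]
    exact integral_add (hw p) (hw q)
  map_smul' c p := by
    simp only [eval_smul, smul_eq_mul, mul_assoc, integral_const_mul, RingHom.id_apply]

lemma weightFunctional_apply {w : ℝ → ℝ} (hw : ∀ p : ℝ[X], Integrable fun x => p.eval x * w x)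
    (p : ℝ[X]) : weightFunctional w hw p = ∫ x, p.eval x * w x :=
  rfl

lemma integral_eq_zero_of_hasDerivAt_of_integrable_of_ne {E : Type*} [NormedAddCommGroup E]
    [NormedSpace ℝ E] [CompleteSpace E] {f f' : ℝ → E} {a : ℝ} (hcont : ContinuousAt f a)
    (hderiv : ∀ x ≠ a, HasDerivAt f (f' x) x) (hf' : Integrable f') (hf : Integrable f) :
    ∫ x, f' x = 0 := by
  have htop : Tendsto f atTop (nhds 0) :=
    tendsto_zero_of_hasDerivAt_of_integrableOn_Ioi (a := a) (fun x hx => hderiv x (ne_of_gt hx))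
      hf'.integrableOn hf.integrableOn
  have hbot : Tendsto f atBot (nhds 0) :=
    tendsto_zero_of_hasDerivAt_of_integrableOn_Iic (a := a - 1)
      (fun x hx => hderiv x (by have := Set.mem_Iic.1 hx; linarith)) hf'.integrableOn
      hf.integrableOn
  rw [← intervalIntegral.integral_Iic_add_Ioi (b := a) hf'.integrableOn hf'.integrableOn,
    integral_Iic_of_hasDerivAt_of_tendsto hcont.continuousWithinAt
      (fun x hx => hderiv x (ne_of_lt hx)) hf'.integrableOn hbot,
    integral_Ioi_of_hasDerivAt_of_tendsto hcont.continuousWithinAt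
      (fun x hx => hderiv x (ne_of_gt hx)) hf'.integrableOn htop]
  simp

lemma weightFunctional_X_mul_derivative {w : ℝ → ℝ} {r : ℝ[X]}
    (hw : ∀ p : ℝ[X], Integrable fun x => p.eval x * w x)
    (hcont : ContinuousAt (fun x => x * w x) 0)
    (hderiv : ∀ x ≠ 0, HasDerivAt w (r.eval x * w x / x) x) (q : ℝ[X]) :
    weightFunctional w hw (X * derivative q) = -weightFunctional w hw ((1 + r) * q) := by
  rw [← add_eq_zero_iff_eq_neg, ← map_add, weightFunctional_apply]
  refine integral_eq_zero_of_hasDerivAt_of_integrable_of_ne (f := fun x => q.eval x * (x * w x))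
    (q.continuous.continuousAt.mul hcont) (fun x hx => ?_) (hw _)
    ((hw (q * X)).congr (.of_forall fun x => by simp [mul_assoc]))
  refine ((q.hasDerivAt x).mul ((hasDerivAt_id x).mul (hderiv x hx))).congr_deriv ?_
  simp only [eval_add, eval_mul, eval_X, eval_one, Pi.mul_apply, id_eq]
  field_simp

lemma integrable_comp_abs {E : Type*} [NormedAddCommGroup E] {f : ℝ → E}
    (hf : IntegrableOn f (Set.Ioi 0)) : Integrable fun x => f |x| := by
  have hpos : IntegrableOn (fun x => f |x|) (Set.Ioi 0) :=
    hf.congr_fun (fun x hx => by rw [abs_of_pos hx]) measurableSet_Ioi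
  rw [← integrableOn_univ, ← Set.Iic_union_Ioi (a := (0 : ℝ)), integrableOn_union,
    integrableOn_Iic_iff_integrableOn_Iio]
  refine ⟨?_, hpos⟩
  simpa using hpos.comp_neg

lemma mul_sq_sub_pow_le {m : ℕ} (hm : 2 ≤ m) (t x : ℝ) :
    t * x ^ 2 - x ^ (2 * m) ≤ 1 + (t + 1) ^ 2 - x ^ 2 := by
  have hpow : (x ^ 2) ^ 2 - 1 ≤ (x ^ 2) ^ m := by
    rcases le_total 1 (x ^ 2) with hx | hx
    · linarith [pow_le_pow_right₀ hx hm]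
    · linarith [pow_le_one₀ (n := 2) (sq_nonneg x) hx, pow_nonneg (sq_nonneg x) m]
  rw [pow_mul]
  nlinarith [sq_nonneg (2 * x ^ 2 - (t + 1)), sq_nonneg (t + 1)]

section FreudWeight

variable {m : ℕ} {lam t : ℝ}

lemma integrable_pow_mul_freudWeight (hm : 2 ≤ m) (hlam : -1 < lam) (n : ℕ) :
    Integrable fun x : ℝ => x ^ n * freudWeight m lam t x := by
  have hs : -1 < n + (2 * lam + 1) := by
    have := n.cast_nonneg (α := ℝ)
    linarith
  have hgauss : Integrable fun x : ℝ => |x| ^ (n + (2 * lam + 1)) * exp (-x ^ 2) := by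
    simpa only [sq_abs, neg_one_mul] using
      integrable_comp_abs (integrableOn_rpow_mul_exp_neg_mul_sq one_pos hs)
  have hmeas : Measurable fun x : ℝ => x ^ n * freudWeight m lam t x := by
    unfold freudWeight
    fun_prop
  refine (hgauss.mul_const (exp (1 + (t + 1) ^ 2))).mono' hmeas.aestronglyMeasurable
    (.of_forall fun x => ?_)
  rw [freudWeight, norm_mul, norm_pow, norm_mul, Real.norm_of_nonneg (exp_pos _).le,
    Real.norm_of_nonneg (rpow_nonneg (abs_nonneg x) _), Real.norm_eq_abs, ← mul_assoc,
    mul_assoc (_ ^ (_ + _)), ← exp_add, neg_add_eq_sub]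
  gcongr ?_ * exp ?_
  · rw [← rpow_natCast]
    exact le_rpow_add (abs_nonneg x) _ _
  · exact mul_sq_sub_pow_le hm t x

lemma integrable_eval_mul_freudWeight (hm : 2 ≤ m) (hlam : -1 < lam) (p : ℝ[X]) :
    Integrable fun x => p.eval x * freudWeight m lam t x := by
  simp only [eval_eq_sum_range, Finset.sum_mul, mul_assoc]
  exact integrable_finsetSum _ fun n _ =>
    (integrable_pow_mul_freudWeight hm hlam n).const_mul (p.coeff n)

lemma continuousAt_mul_freudWeight (hlam : -1 < lam) :
    ContinuousAt (fun x => x * freudWeight m lam t x) 0 := by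
  have hnorm (x : ℝ) : ‖x * freudWeight m lam t x‖ =
      |x| ^ (2 * lam + 1 + 1) * exp (t * x ^ 2 - x ^ (2 * m)) := by
    rw [freudWeight, norm_mul, norm_mul, Real.norm_of_nonneg (exp_pos _).le,
      Real.norm_of_nonneg (rpow_nonneg (abs_nonneg x) _), Real.norm_eq_abs,
      rpow_add_one' (y := 2 * lam + 1) (abs_nonneg x) (ne_of_gt (by linarith))]
    ring
  have hcont : ContinuousAt
      (fun x : ℝ => |x| ^ (2 * lam + 1 + 1) * exp (t * x ^ 2 - x ^ (2 * m))) 0 :=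
    (continuous_abs.continuousAt.rpow_const (.inr (by linarith))).mul (by fun_prop)
  rw [ContinuousAt, zero_mul, tendsto_zero_iff_norm_tendsto_zero]
  simp only [hnorm]
  have hzero : (0 : ℝ) ^ (2 * lam + 1 + 1) = 0 := zero_rpow (by linarith)
  simpa [ContinuousAt, hzero] using hcont

lemma hasDerivAt_freudWeight (hm : m ≠ 0) {x : ℝ} (hx : x ≠ 0) :
    HasDerivAt (freudWeight m lam t)
      ((2 * lam + 1 + 2 * t * x ^ 2 - 2 * m * x ^ (2 * m)) * freudWeight m lam t x / x) x := by
  have hrpow : HasDerivAt (fun x : ℝ => |x| ^ (2 * lam + 1))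
      ((2 * lam + 1) * |x| ^ (2 * lam + 1) / x) x := by
    refine ((hasDerivAt_abs hx).rpow_const (.inl (abs_ne_zero.2 hx))).congr_deriv ?_
    rw [rpow_sub_one (abs_ne_zero.2 hx)]
    rcases hx.lt_or_gt with hx | hx
    · simp only [hx, _root_.sign_neg, SignType.coe_neg, SignType.coe_one, abs_of_neg hx]
      field_simp
    · simp only [hx, sign_pos, SignType.coe_one, one_mul, abs_of_pos hx]
      field_simp
  have hexp : HasDerivAt (fun x : ℝ => exp (t * x ^ 2 - x ^ (2 * m)))
      (exp (t * x ^ 2 - x ^ (2 * m)) * ((2 * t * x ^ 2 - 2 * m * x ^ (2 * m)) / x)) x := by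
    refine (((hasDerivAt_pow 2 x).const_mul t).sub (hasDerivAt_pow (2 * m) x)).exp.congr_deriv ?_
    rw [pow_sub₀ x hx (by omega : 1 ≤ 2 * m)]
    push_cast
    field_simp
    simp [mul_comm]
  refine (hrpow.mul hexp).congr_deriv ?_
  rw [freudWeight]
  field_simp
  ring

lemma weightFunctional_freudWeight_X_mul_derivative (hm : 2 ≤ m) (hlam : -1 < lam)
    (hw : ∀ p : ℝ[X], Integrable fun x => p.eval x * freudWeight m lam t x) (q : ℝ[X]) :
    weightFunctional _ hw (X * derivative q) =
      2 * m * weightFunctional _ hw (X ^ (2 * m) * q) - 2 * t * weightFunctional _ hw (X ^ 2 * q) -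
        (2 * lam + 1 + 1) * weightFunctional _ hw q := by
  rw [weightFunctional_X_mul_derivative (r := C (2 * lam + 1) + (2 * t) • X ^ 2 -
    (2 * m : ℝ) • X ^ (2 * m)) hw (continuousAt_mul_freudWeight hlam)
    (fun x hx => by simpa using hasDerivAt_freudWeight (by omega) hx)]
  have hexpand : (1 + (C (2 * lam + 1) + (2 * t) • X ^ 2 - (2 * m : ℝ) • X ^ (2 * m))) * q =
      (2 * lam + 1 + 1) • q + (2 * t) • (X ^ 2 * q) - (2 * m : ℝ) • (X ^ (2 * m) * q) := by
    simp only [smul_eq_C_mul, C_add, C_mul, C_1]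
    ring
  rw [hexpand]
  simp only [map_add, map_sub, map_smul, smul_eq_mul]
  ring

lemma weightFunctional_freudWeight_one_pos
    (hw : ∀ p : ℝ[X], Integrable fun x => p.eval x * freudWeight m lam t x) :
    0 < weightFunctional _ hw 1 := by
  have hpos (x : ℝ) (hx : x ≠ 0) : 0 < freudWeight m lam t x :=
    mul_pos (rpow_pos_of_pos (abs_pos.2 hx) _) (exp_pos _)
  rw [weightFunctional_apply, integral_pos_iff_support_of_nonneg _ (hw 1)]
  · refine lt_of_lt_of_le ?_ (measure_mono (s := Set.Ioi 0) fun x hx => ?_)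
    · simp
    · simpa using (hpos x (ne_of_gt hx)).ne'
  · intro x
    simp only [eval_one, one_mul, freudWeight, Pi.zero_apply]
    positivity

end FreudWeight

/-! ### Recurrence coefficients of the generalised Freud weight -/

lemma four_pow_mul_ascPochhammer_half_mul_factorial (m : ℕ) :
    4 ^ m * (ascPochhammer ℝ m).eval (1 / 2) * m.factorial = (2 * m).factorial := by
  induction m with
  | zero => simp
  | succ m ih =>
    rw [ascPochhammer_succ_eval, mul_add_one 2 m, Nat.factorial_succ, Nat.factorial_succ,
      Nat.factorial_succ]
    push_cast
    rw [← ih]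
    ring

lemma two_mul_mul_choose_mul_factorial {m : ℕ} (hm : m ≠ 0) :
    2 * m * (2 * m - 1).choose (m - 1) * (m - 1).factorial =
      4 ^ m * (ascPochhammer ℝ m).eval (1 / 2) := by
  have hchoose : (2 * m - 1).choose (m - 1) * (m - 1).factorial * m.factorial =
      (2 * m - 1).factorial := by
    have h := Nat.choose_mul_factorial_mul_factorial (by omega : m - 1 ≤ 2 * m - 1)
    rwa [show 2 * m - 1 - (m - 1) = m by omega] at h
  have hfactorial : 2 * m * (2 * m - 1).factorial = (2 * m).factorial :=
    Nat.mul_factorial_pred (by omega)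
  apply mul_right_cancel₀ (Nat.cast_ne_zero.2 m.factorial_ne_zero : (m.factorial : ℝ) ≠ 0)
  rw [four_pow_mul_ascPochhammer_half_mul_factorial, ← hfactorial, ← hchoose]
  push_cast
  ring

lemma choose_mul_freudLimit_pow {m : ℕ} (hm : m ≠ 0) :
    (2 * m - 1).choose (m - 1) *
      (1 / 4 * ((m - 1).factorial / (ascPochhammer ℝ m).eval (1 / 2)) ^ ((1 : ℝ) / m)) ^ m =
      1 / (2 * m) := by
  have hpoch : 0 < (ascPochhammer ℝ m).eval (1 / 2) := ascPochhammer_pos m _ (by norm_num)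
  rw [mul_pow, one_div_pow, one_div (m : ℝ), rpow_inv_natCast_pow (by positivity) hm]
  field_simp
  linear_combination two_mul_mul_choose_mul_factorial hm

/-- Recurrence coefficients `β 1, β 2, …` extended by zero to `ℤ`, so that `β 0` is replaced by
`0`. -/
def extendCoeff {R : Type*} [Zero R] (β : ℕ → R) (k : ℤ) : R :=
  if 1 ≤ k then β k.toNat else 0

lemma extendCoeff_natCast {R : Type*} [Zero R] (β : ℕ → R) {n : ℕ} (hn : 1 ≤ n) :
    extendCoeff β n = β n := by
  simp [extendCoeff, hn]

lemma extendCoeff_zero {R : Type*} [Zero R] (β : ℕ → R) : extendCoeff β 0 = 0 := by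
  simp [extendCoeff]

lemma extendCoeff_nonneg {β : ℕ → ℝ} (hβ : ∀ n, 1 ≤ n → 0 < β n) (k : ℤ) :
    0 ≤ extendCoeff β k := by
  rw [extendCoeff]
  split_ifs with hk
  · exact (hβ _ (by omega)).le
  · exact le_rfl

lemma isMonicOrthogonal_weightFunctional {w : ℝ → ℝ} {P : ℕ → ℝ[X]} {β : ℕ → ℝ}
    (hw : ∀ p : ℝ[X], Integrable fun x => p.eval x * w x)
    (hmonic : ∀ n, (P n).Monic) (hdeg : ∀ n, (P n).natDegree = n)
    (horth : ∀ j k, j ≠ k → ∫ x, (P j).eval x * (P k).eval x * w x = 0)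
    (hP0 : P 0 = 1) (hP1 : P 1 = X)
    (hrec : ∀ n, 1 ≤ n → P (n + 1) = X * P n - C (β n) * P (n - 1)) :
    IsMonicOrthogonal (weightFunctional w hw) P (extendCoeff β) where
  monic := hmonic
  natDegree_eq := hdeg
  orthogonal i j hij := by simpa [weightFunctional_apply] using horth i j hij
  coeff_zero := extendCoeff_zero β
  X_mul n := by
    rcases n.eq_zero_or_pos with rfl | hn
    · simp [hP0, hP1, extendCoeff_zero]
    · rw [hrec n hn, extendCoeff_natCast β hn, smul_eq_C_mul, sub_add_cancel]

/-- For `λ > −1`, `t ∈ ℝ` and integer `m ≥ 2`, the recurrence coefficients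
`β_n(t;λ)` of the monic polynomials orthogonal with respect to the generalised higher order
Freud weight satisfy `lim_{n→∞} β_n/n^{1/m} = (1/4)((m−1)!/(1/2)_m)^{1/m}`, where `(1/2)_m`
is the Pochhammer symbol. -/
theorem freud_conjecture_asymptotics (m : ℕ) (hm : 2 ≤ m) (lam t : ℝ) (hlam : -1 < lam)
    (P : ℕ → Polynomial ℝ) (β : ℕ → ℝ)
    (hmonic : ∀ n, (P n).Monic) (hdeg : ∀ n, (P n).natDegree = n)
    (horth : ∀ j k, j ≠ k →
      ∫ x : ℝ, (P j).eval x * (P k).eval x * freudWeight m lam t x = 0)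
    (hβpos : ∀ n, 1 ≤ n → 0 < β n)
    (hP0 : P 0 = 1) (hP1 : P 1 = X)
    (hrec : ∀ n, 1 ≤ n → P (n + 1) = X * P n - C (β n) * P (n - 1)) :
    Tendsto (fun n : ℕ => β n / (n : ℝ) ^ ((1 : ℝ) / (m : ℝ))) atTop
      (nhds ((1 / 4) *
        ((Nat.factorial (m - 1) : ℝ) / (ascPochhammer ℝ m).eval ((1 : ℝ) / 2))
          ^ ((1 : ℝ) / (m : ℝ)))) := by
  have hw := integrable_eval_mul_freudWeight (t := t) hm hlam
  have hOrth := isMonicOrthogonal_weightFunctional hw hmonic hdeg horth hP0 hP1 hrec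
  have hne (n : ℕ) : extendCoeff β (n + 1) ≠ 0 := by
    have := extendCoeff_natCast β n.succ_pos
    push_cast at this
    exact this ▸ (hβpos _ n.succ_pos).ne'
  have hfreud (n : ℕ) :
      |2 * m * freudForm m (extendCoeff β) n - 2 * t * extendCoeff β n - n| ≤ |2 * lam + 1| := by
    rw [hOrth.freud_equation (by omega) (weightFunctional_freudWeight_one_pos hw).ne' hne
      (weightFunctional_freudWeight_X_mul_derivative hm hlam hw)]
    split_ifs <;> ring_nf <;> simp
  have hform := tendsto_freudForm_div_of_abs_sub_le hm (extendCoeff_nonneg hβpos) hfreud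
  rw [← choose_mul_freudLimit_pow (by omega)] at hform
  have hpoch : 0 < (ascPochhammer ℝ m).eval (1 / 2) := ascPochhammer_pos m _ (by norm_num)
  refine (tendsto_div_rpow_of_tendsto_freudForm (by omega) (by positivity)
    (extendCoeff_nonneg hβpos) hform).congr' ?_
  filter_upwards [eventually_ge_atTop 1] with n hn
  rw [extendCoeff_natCast β hn]
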